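/- arXiv:1802.05051 — 8 statements merged into one kernel-verified Lean document; each statement's English description precedes it below -/
import Mathlib

section
/- Let H₁ and H₂ be two k-uniform hypergraphs on n vertices. If |E(H₁)| + |E(H₂)| < 2·√(C(n,k)), then H₁ and H₂ pack. -/
open Finset

/-- A family of edges is `k`-uniform if every edge has exactly `k` vertices. -/
def Uniform (k : ℕ) {V : Type*} (E : Finset (Finset V)) : Prop :=
  ∀ e ∈ E, e.card = k

/-- Two hypergraphs (given by their edge sets) pack if there is a bijection of the
vertex sets mapping every edge of the first to a non-edge of the second. -/
def Packs {V₁ V₂ : Type*} [DecidableEq V₂]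
    (E₁ : Finset (Finset V₁)) (E₂ : Finset (Finset V₂)) : Prop :=
  ∃ f : V₁ ≃ V₂, ∀ e ∈ E₁, e.image f ∉ E₂

/-- `maxDeg l E` is `Δ_l(H)`: the maximum, over `l`-element vertex subsets `U`,
of the number of edges containing `U`. -/
def maxDeg {V : Type*} [Fintype V] [DecidableEq V] (l : ℕ) (E : Finset (Finset V)) : ℕ :=
  (Finset.univ.powersetCard l).sup fun U => (E.filter fun e => U ⊆ e).card

/-- A `t`-`(n, k, lam)` design: a family of `k`-element subsets such that every
`t`-element vertex subset is contained in exactly `lam` members. -/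
def IsDesign (t k lam : ℕ) {V : Type*} [Fintype V] [DecidableEq V]
    (T : Finset (Finset V)) : Prop :=
  (∀ e ∈ T, e.card = k) ∧
  ∀ S : Finset V, S.card = t → (T.filter fun e => S ⊆ e).card = lam

/-- `mMin n k` is the minimum possible value of `|E(H₁)| + |E(H₂)|` over all pairs of
`k`-uniform hypergraphs `H₁`, `H₂` on `n` vertices that do not pack. -/
noncomputable def mMin (n k : ℕ) : ℕ :=
  sInf {m | ∃ E₁ E₂ : Finset (Finset (Fin n)), Uniform k E₁ ∧ Uniform k E₂ ∧
    ¬ Packs E₁ E₂ ∧ E₁.card + E₂.card = m}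

/-!
If a group acts transitively on `X` and none of its elements moves `A` off `B`, then it is covered
by the sets `{g | g • x = y}` with `x ∈ A` and `y ∈ B`. Each of these is a coset of a stabilizer,
which has index `|X|`, so `|A| * |B| ≥ |X|`. Packing asks for a permutation of the vertices that
moves the edges of `E₁` off those of `E₂`, so `X` is the set of all `k`-sets of vertices, and by
AM-GM the bound on `|E₁| + |E₂|` gives `|E₁| * |E₂| < C(n, k)`.
-/

open MulAction
open scoped Pointwise

theorem smul_stabilizer_eq_setOf_smul_eq {G X : Type*} [Group G] [MulAction G X]
    {g : G} {x y : X} (hg : g • x = y) :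
    g • (stabilizer G x : Set G) = {h | h • x = y} := by
  ext h
  rw [Set.mem_smul_set_iff_inv_smul_mem, SetLike.mem_coe, smul_eq_mul, mem_stabilizer_iff, mul_smul,
    inv_smul_eq_iff, hg, Set.mem_ofPred_eq]

theorem exists_forall_smul_notMem_of_card_mul_card_lt (G : Type*) {X : Type*} [Group G]
    [MulAction G X] [IsPretransitive G X] {A B : Finset X} (hAB : #A * #B < Nat.card X) :
    ∃ g : G, ∀ x ∈ A, g • x ∉ B := by
  by_contra! hmeet
  choose g hg using fun p : X × X ↦ exists_smul_eq G p.1 p.2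
  have hcover : ⋃ p ∈ A ×ˢ B, g p • (stabilizer G p.1 : Set G) = Set.univ := by
    refine Set.eq_univ_of_forall fun h ↦ ?_
    obtain ⟨x, hx, hy⟩ := hmeet h
    refine Set.mem_biUnion (Finset.mk_mem_product hx hy) ?_
    rw [smul_stabilizer_eq_setOf_smul_eq (hg (x, h • x)), Set.mem_ofPred_eq]
  have hone_le : (1 : ℚ) ≤ (#A * #B : ℕ) * (Nat.card X : ℚ)⁻¹ := by
    simpa only [index_stabilizer_of_transitive, sum_const, card_product, nsmul_eq_mul]
      using Subgroup.one_le_sum_inv_index_of_leftCoset_cover hcover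
  have hX : (0 : ℚ) < Nat.card X := mod_cast Nat.zero_lt_of_lt hAB
  rw [← div_eq_mul_inv, one_le_div hX, Nat.cast_le] at hone_le
  exact hAB.not_ge hone_le

theorem Uniform.packs_of_card_mul_card_lt {V : Type*} [DecidableEq V] {k : ℕ}
    {E F : Finset (Finset V)} (hE : Uniform k E) (hEF : #E * #F < (Nat.card V).choose k) :
    Packs E F := by
  classical
  have : IsPretransitive (Equiv.Perm V) (Set.powersetCard V k) := Set.powersetCard.isPretransitive
  let kSets (D : Finset (Finset V)) : Finset (Set.powersetCard V k) :=
    D.subtype (· ∈ Set.powersetCard V k)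
  have card_kSets_le (D) : #(kSets D) ≤ #D := by
    rw [Finset.card_subtype]
    exact card_filter_le _ _
  have hlt : #(kSets E) * #(kSets F) < Nat.card (Set.powersetCard V k) := by
    rw [Set.powersetCard.card]
    exact (Nat.mul_le_mul (card_kSets_le E) (card_kSets_le F)).trans_lt hEF
  obtain ⟨σ, hσ⟩ := exists_forall_smul_notMem_of_card_mul_card_lt (Equiv.Perm V) hlt
  exact ⟨σ, fun e he heF ↦ hσ ⟨e, hE e he⟩ (mem_subtype.mpr he) (mem_subtype.mpr heF)⟩

theorem Uniform.map {V₁ V₂ : Type*} {k : ℕ} {E : Finset (Finset V₁)} (hE : Uniform k E)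
    (f : V₁ ↪ V₂) : Uniform k (E.map (mapEmbedding f).toEmbedding) := by
  intro e he
  obtain ⟨d, hd, rfl⟩ := Finset.mem_map.mp he
  exact (card_map f).trans (hE d hd)

theorem Packs.of_map_equiv {V₁ V₂ V₃ : Type*} [DecidableEq V₃] {E₁ : Finset (Finset V₁)}
    {E₃ : Finset (Finset V₃)} (τ : V₁ ≃ V₂)
    (h : Packs (E₁.map (mapEmbedding τ.toEmbedding).toEmbedding) E₃) : Packs E₁ E₃ := by
  classical
  obtain ⟨σ, hσ⟩ := h
  refine ⟨τ.trans σ, fun e he ↦ ?_⟩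
  have himage : e.image (τ.trans σ) = (e.map τ.toEmbedding).image σ := by
    rw [map_eq_image, image_image, Equiv.coe_trans, Equiv.coe_toEmbedding]
  rw [himage]
  exact hσ _ (mem_map_of_mem _ he)

theorem mul_lt_of_add_lt_two_mul_sqrt {a b c : ℝ} (hab : 0 ≤ a + b) (h : a + b < 2 * √c) :
    a * b < c := by
  have hmean : ((a + b) / 2) ^ 2 < c := (Real.lt_sqrt (by linarith)).mp (by linarith)
  linarith [four_mul_le_sq_add a b]

theorem stmt_3_general {V₁ V₂ : Type*} [Finite V₁] [Finite V₂] [DecidableEq V₂] {k : ℕ}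
    {E₁ : Finset (Finset V₁)} {E₂ : Finset (Finset V₂)} (hV : Nat.card V₁ = Nat.card V₂)
    (h₁ : Uniform k E₁) (h : #E₁ * #E₂ < (Nat.card V₂).choose k) :
    Packs E₁ E₂ := by
  obtain ⟨τ⟩ := Finite.card_eq.mp hV
  refine .of_map_equiv τ <| (h₁.map τ.toEmbedding).packs_of_card_mul_card_lt ?_
  rwa [card_map]

/-- if `|E(H₁)| + |E(H₂)| < 2·√(C(n,k))` then the two `k`-uniform
hypergraphs on `n` vertices pack. -/
theorem stmt_3 (k n : ℕ)
    (E₁ E₂ : Finset (Finset (Fin n))) (h₁ : Uniform k E₁) (h₂ : Uniform k E₂)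
    (h : ((E₁.card + E₂.card : ℕ) : ℝ) < 2 * Real.sqrt (n.choose k)) :
    Packs E₁ E₂ := by
  have hprod : (#E₁ * #E₂ : ℝ) < n.choose k :=
    mul_lt_of_add_lt_two_mul_sqrt (by positivity) (by exact_mod_cast h)
  exact stmt_3_general rfl h₁ (by simpa using mod_cast hprod)
end

section
/- For all n ≥ k ≥ 2, m(n,k) ≥ 2·√(C(n,k)); that is, any two k-uniform hypergraphs H₁ and H₂ on n vertices that do not pack satisfy |E(H₁)| + |E(H₂)| ≥ 2·√(C(n,k)). In particular, m(n,k) = Ω(n^{k/2}) for fixed k. -/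
open Finset

/-!
A bijection is a packing unless it carries some edge of `H₁` to an edge of `H₂`. A given `k`-set
is carried to a given `k`-set by `k! (n - k)!` of the `n!` bijections, so if no bijection is a
packing then `n! ≤ |E(H₁)| |E(H₂)| k! (n - k)!`, that is, `C(n, k) ≤ |E(H₁)| |E(H₂)|`. The AM-GM
inequality turns this product bound into the bound on the sum, and `(n / k) ^ k ≤ C(n, k)` gives the
growth rate for fixed `k`.
-/

open scoped Nat

section Counting

variable {V₁ V₂ : Type*} [DecidableEq V₁] [DecidableEq V₂]

/-- A bijection carrying `s` onto `t` amounts to a bijection `s ≃ t` together with a bijection of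
the complements; this is used to count such bijections. -/
def equivImageEqEquivProd (s : Finset V₁) (t : Finset V₂) :
    {f : V₁ ≃ V₂ // s.image f = t} ≃
      ({x // x ∈ s} ≃ {y // y ∈ t}) × ({x // x ∉ s} ≃ {y // y ∉ t}) where
  toFun f :=
    have mem_iff (x : V₁) : x ∈ s ↔ f.1 x ∈ t := by simp [← f.2]
    (f.1.subtypeEquiv mem_iff, f.1.subtypeEquiv fun x => not_congr (mem_iff x))
  invFun g :=
    ⟨(Equiv.sumCompl (· ∈ s)).symm.trans ((g.1.sumCongr g.2).trans (Equiv.sumCompl (· ∈ t))), by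
      rw [← Equiv.coe_toEmbedding, ← map_eq_image]
      ext y
      rw [mem_map_equiv]
      by_cases hy : y ∈ t
      · simp [hy]
      · simpa [hy] using (g.2.symm ⟨y, hy⟩).2⟩
  left_inv f := by
    ext x
    by_cases hx : x ∈ s <;> simp [hx]
  right_inv g := by
    ext x <;> simp

variable [Fintype V₁] [Fintype V₂]

theorem card_filter_image_eq {s : Finset V₁} {t : Finset V₂}
    (hV : Fintype.card V₁ = Fintype.card V₂) (hst : #s = #t) :
    #{f : V₁ ≃ V₂ | s.image f = t} = (#s)! * (Fintype.card V₁ - #s)! := by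
  have e : {x // x ∈ s} ≃ {y // y ∈ t} := Fintype.equivOfCardEq (by simpa using hst)
  have e' : {x // x ∉ s} ≃ {y // y ∉ t} :=
    Fintype.equivOfCardEq (by simp [Fintype.card_subtype_compl, hV, hst])
  rw [← Fintype.card_subtype, Fintype.card_congr (equivImageEqEquivProd s t), Fintype.card_prod,
    Fintype.card_equiv e, Fintype.card_equiv e']
  simp [Fintype.card_subtype_compl]

end Counting

section Packing

variable {k : ℕ} {V₁ V₂ : Type*} [Fintype V₁] [Fintype V₂] [DecidableEq V₂]
  {E₁ : Finset (Finset V₁)} {E₂ : Finset (Finset V₂)}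

theorem le_card_of_not_packs (hV : Fintype.card V₁ = Fintype.card V₂) (h₁ : Uniform k E₁)
    (hp : ¬ Packs E₁ E₂) : k ≤ Fintype.card V₁ := by
  obtain ⟨e, he⟩ : E₁.Nonempty := by
    contrapose! hp
    exact ⟨Fintype.equivOfCardEq hV, by simp [hp]⟩
  exact h₁ e he ▸ e.card_le_univ

theorem choose_le_card_mul_card_of_not_packs (hV : Fintype.card V₁ = Fintype.card V₂)
    (h₁ : Uniform k E₁) (h₂ : Uniform k E₂) (hp : ¬ Packs E₁ E₂) :
    (Fintype.card V₁).choose k ≤ #E₁ * #E₂ := by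
  classical
  set n := Fintype.card V₁
  have exists_pair (f : V₁ ≃ V₂) : ∃ p ∈ E₁ ×ˢ E₂, p.1.image f = p.2 := by
    by_contra! hf
    exact hp ⟨f, fun e he he' => hf (e, e.image f) (mem_product.2 ⟨he, he'⟩) rfl⟩
  have card_bijections (p) (hmem : p ∈ E₁ ×ˢ E₂) :
      #{f : V₁ ≃ V₂ | p.1.image f = p.2} = k ! * (n - k)! := by
    have card_fst : #p.1 = k := h₁ _ (mem_product.1 hmem).1
    have card_snd : #p.2 = k := h₂ _ (mem_product.1 hmem).2
    rw [card_filter_image_eq hV (card_fst.trans card_snd.symm), card_fst]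
  have double_count : n ! * 1 ≤ #(E₁ ×ˢ E₂) * (k ! * (n - k)!) := by
    rw [← Fintype.card_equiv (Fintype.equivOfCardEq hV), ← card_univ]
    refine card_mul_le_card_mul
      (fun (f : V₁ ≃ V₂) (p : Finset V₁ × Finset V₂) => p.1.image f = p.2)
      (fun f _ => ?_) fun p hmem => (card_bijections p hmem).le
    exact card_pos.2 ((exists_pair f).imp fun _ => mem_filter.2)
  rw [← Nat.choose_mul_factorial_mul_factorial (le_card_of_not_packs hV h₁ hp), mul_one, mul_assoc,
    card_product] at double_count
  exact Nat.le_of_mul_le_mul_right double_count (by positivity)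

theorem two_mul_sqrt_choose_le_of_not_packs (hV : Fintype.card V₁ = Fintype.card V₂)
    (h₁ : Uniform k E₁) (h₂ : Uniform k E₂) (hp : ¬ Packs E₁ E₂) :
    2 * √((Fintype.card V₁).choose k) ≤ ((#E₁ + #E₂ : ℕ) : ℝ) := by
  have four_mul_choose_le : 4 * (Fintype.card V₁).choose k ≤ (#E₁ + #E₂) ^ 2 :=
    calc
      4 * (Fintype.card V₁).choose k ≤ 4 * (#E₁ * #E₂) := by
        gcongr
        exact choose_le_card_mul_card_of_not_packs hV h₁ h₂ hp
      _ = 4 * #E₁ * #E₂ := (mul_assoc ..).symm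
      _ ≤ (#E₁ + #E₂) ^ 2 := four_mul_le_sq_add ..
  refine le_of_sq_le_sq ?_ (by positivity)
  calc
    (2 * √((Fintype.card V₁).choose k)) ^ 2 = 4 * (Fintype.card V₁).choose k := by
      rw [mul_pow, Real.sq_sqrt (by positivity)]
      norm_num
    _ ≤ ((#E₁ + #E₂ : ℕ) : ℝ) ^ 2 := mod_cast four_mul_choose_le

end Packing

theorem pow_le_pow_self_mul_choose {n k : ℕ} (hkn : k ≤ n) : n ^ k ≤ k ^ k * n.choose k := by
  have factor_le (i : ℕ) : n * (k - i) ≤ k * (n - i) := by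
    rw [Nat.mul_sub, Nat.mul_sub, mul_comm n k]
    gcongr
  refine Nat.le_of_mul_le_mul_left ?_ k.factorial_pos
  calc
    k ! * n ^ k = ∏ i ∈ range k, n * (k - i) := by
      rw [prod_mul_distrib, ← Nat.descFactorial_eq_prod_range, Nat.descFactorial_self, prod_const,
        card_range, mul_comm]
    _ ≤ ∏ i ∈ range k, k * (n - i) := prod_le_prod' fun i _ => factor_le i
    _ = k ! * (k ^ k * n.choose k) := by
      rw [prod_mul_distrib, ← Nat.descFactorial_eq_prod_range,
        Nat.descFactorial_eq_factorial_mul_choose, prod_const, card_range, mul_left_comm]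

theorem rpow_half_div_le_sqrt_choose {n k : ℕ} (hkn : k ≤ n) :
    (n : ℝ) ^ ((k : ℝ) / 2) / √(k ^ k) ≤ √(n.choose k) := by
  have pow_self_pos : (0 : ℝ) < k ^ k := mod_cast k.pow_self_pos
  have rpow_eq_sqrt : (n : ℝ) ^ ((k : ℝ) / 2) = √(n ^ k) := by
    rw [Real.rpow_div_two_eq_sqrt _ n.cast_nonneg, Real.rpow_natCast, Real.sqrt_eq_rpow,
      Real.sqrt_eq_rpow, Real.rpow_pow_comm n.cast_nonneg]
  rw [rpow_eq_sqrt, ← Real.sqrt_div' _ pow_self_pos.le]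
  gcongr
  rw [div_le_iff₀' pow_self_pos]
  exact_mod_cast pow_le_pow_self_mul_choose hkn

theorem stmt_4_general {k : ℕ} {V₁ V₂ : Type*} [Fintype V₁] [Fintype V₂] [DecidableEq V₂]
    (hV : Fintype.card V₁ = Fintype.card V₂) {E₁ : Finset (Finset V₁)} {E₂ : Finset (Finset V₂)}
    (h₁ : Uniform k E₁) (h₂ : Uniform k E₂) (hp : ¬ Packs E₁ E₂) :
    2 * √((Fintype.card V₁).choose k) ≤ ((#E₁ + #E₂ : ℕ) : ℝ) ∧
    2 / √(k ^ k) * (Fintype.card V₁ : ℝ) ^ ((k : ℝ) / 2) ≤ ((#E₁ + #E₂ : ℕ) : ℝ) := by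
  have sum_ge := two_mul_sqrt_choose_le_of_not_packs hV h₁ h₂ hp
  refine ⟨sum_ge, le_trans ?_ sum_ge⟩
  rw [div_mul_eq_mul_div, mul_div_assoc]
  gcongr
  exact rpow_half_div_le_sqrt_choose (le_card_of_not_packs hV h₁ hp)

/-- for `n ≥ k ≥ 2`, any two non-packing `k`-uniform hypergraphs on `n`
vertices satisfy `|E(H₁)| + |E(H₂)| ≥ 2·√(C(n,k))`; in particular, for fixed `k`,
`m(n,k) = Ω(n^(k/2))`. -/
theorem stmt_4 (k : ℕ) (hk : 2 ≤ k) :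
    (∀ n : ℕ, k ≤ n → ∀ E₁ E₂ : Finset (Finset (Fin n)),
      Uniform k E₁ → Uniform k E₂ → ¬ Packs E₁ E₂ →
      2 * Real.sqrt (n.choose k) ≤ ((E₁.card + E₂.card : ℕ) : ℝ)) ∧
    ∃ c : ℝ, 0 < c ∧ ∀ n : ℕ, k ≤ n → ∀ E₁ E₂ : Finset (Finset (Fin n)),
      Uniform k E₁ → Uniform k E₂ → ¬ Packs E₁ E₂ →
      c * (n : ℝ) ^ ((k : ℝ) / 2) ≤ ((E₁.card + E₂.card : ℕ) : ℝ) := by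
  refine ⟨fun n _ E₁ E₂ h₁ h₂ hp => ?_, 2 / √(k ^ k),
    div_pos two_pos (Real.sqrt_pos.2 (mod_cast k.pow_self_pos)), fun n _ E₁ E₂ h₁ h₂ hp => ?_⟩
  · simpa only [Fintype.card_fin] using (stmt_4_general rfl h₁ h₂ hp).1
  · simpa only [Fintype.card_fin] using (stmt_4_general rfl h₁ h₂ hp).2
end

section
/- Let H₁ and H₂ be two k-uniform hypergraphs on n vertices. If |E(H₁)|·|E(H₂)| < C(n,k), then H₁ and H₂ pack. -/
open Finset

/-!
A bijection fails to pack exactly when it carries some edge of `E₁` onto some edge of `E₂`. For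
fixed `s` and `t`, the permutations carrying the `k`-set `s` onto the `k`-set `t` form a left coset
of the stabilizer of `s`, whose index is the number of `k`-sets. If no permutation packs, then
`|E₁| |E₂|` such cosets cover the symmetric group, so by B. H. Neumann's lemma (the reciprocals of
the indices in a covering by cosets sum to at least `1`) there are at least as many pairs of edges
as `k`-sets.
-/

/-!
Two hypergraphs on the same vertex set fail to pack exactly when every permutation carries some
edge of the first onto some edge of the second. The permutations carrying a `k`-set `s` onto a
`k`-set `t` form a left coset of the stabilizer of `s`, whose index is the number of `k`-sets. If
nothing packs, these cosets, one for each pair of edges, cover the symmetric group. By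
B. H. Neumann's lemma the reciprocals of their indices sum to at least `1`, so there are at least
as many pairs of edges as `k`-sets.
-/

open scoped Pointwise

theorem setOf_smul_eq_smul_eq_leftCoset_stabilizer {G X : Type*} [Group G] [MulAction G X]
    (g : G) (x : X) :
    {h : G | h • x = g • x} = g • (MulAction.stabilizer G x : Set G) := by
  ext h
  rw [Set.mem_smul_set_iff_inv_smul_mem, SetLike.mem_coe, MulAction.mem_stabilizer_iff, smul_eq_mul,
    mul_smul, inv_smul_eq_iff, Set.mem_ofPred_eq]

theorem exists_forall_smul_notMem_of_card_mul_card_lt_s5 {G X : Type*} [Group G] [MulAction G X]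
    [MulAction.IsPretransitive G X] {S T : Finset X} (h : (#S * #T : ℕ∞) < ENat.card X) :
    ∃ g : G, ∀ s ∈ S, g • s ∉ T := by
  contrapose! h with hmeet
  choose τ hτ using MulAction.exists_smul_eq (M := G) (α := X)
  have hcover : ⋃ p ∈ S ×ˢ T, τ p.1 p.2 • (MulAction.stabilizer G p.1 : Set G) = Set.univ := by
    refine Set.eq_univ_of_forall fun g ↦ ?_
    obtain ⟨s, hs, hgs⟩ := hmeet g
    refine Set.mem_biUnion (x := (s, g • s)) (mem_product.2 ⟨hs, hgs⟩) ?_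
    rw [← setOf_smul_eq_smul_eq_leftCoset_stabilizer, Set.mem_ofPred_eq, hτ]
  have hsum : (1 : ℚ) ≤ #S * #T * (Nat.card X : ℚ)⁻¹ := by
    simpa only [MulAction.index_stabilizer_of_transitive, sum_const, card_product, nsmul_eq_mul,
      Nat.cast_mul] using Subgroup.one_le_sum_inv_index_of_leftCoset_cover hcover
  -- For infinite `X` the junk value `Nat.card X = 0` turns `hsum` into `1 ≤ 0`.
  have hcard : Nat.card X ≠ 0 := by
    intro h0
    norm_num [h0] at hsum
  have : Finite X := (Nat.card_ne_zero.1 hcard).2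
  rw [← div_eq_mul_inv, one_le_div₀ (by positivity)] at hsum
  rw [ENat.card_eq_coe_natCard]
  exact_mod_cast hsum

theorem Packs.of_map_finsetCongr {V₁ V₂ V₃ : Type*} [DecidableEq V₃]
    {E₁ : Finset (Finset V₁)} {E₃ : Finset (Finset V₃)} (e : V₁ ≃ V₂)
    (h : Packs (E₁.map e.finsetCongr.toEmbedding) E₃) : Packs E₁ E₃ := by
  classical
  obtain ⟨f, hf⟩ := h
  refine ⟨e.trans f, fun s hs ↦ ?_⟩
  simpa [map_eq_image, image_image] using hf _ (mem_map_of_mem _ hs)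

theorem Uniform.map_finsetCongr {k : ℕ} {V₁ V₂ : Type*} {E : Finset (Finset V₁)}
    (h : Uniform k E) (e : V₁ ≃ V₂) : Uniform k (E.map e.finsetCongr.toEmbedding) :=
  forall_mem_map.2 fun s hs ↦ (card_map _).trans (h s hs)

theorem Uniform.packs_of_card_mul_card_lt_s5 {k : ℕ} {V : Type*} [DecidableEq V]
    {E₁ E₂ : Finset (Finset V)} (h₁ : Uniform k E₁)
    (h : (#E₁ * #E₂ : ℕ∞) < (Set.powersetCard V k).encard) : Packs E₁ E₂ := by
  classical
  let kEdges (E : Finset (Finset V)) : Finset (Set.powersetCard V k) := E.subtype _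
  have card_kEdges_le (E : Finset (Finset V)) : #(kEdges E) ≤ #E :=
    (card_subtype _ E).trans_le (card_filter_le _ _)
  have card_kEdges_mul_lt : (#(kEdges E₁) * #(kEdges E₂) : ℕ∞) < (Set.powersetCard V k).encard := by
    refine lt_of_le_of_lt ?_ h
    gcongr <;> exact card_kEdges_le _
  have : MulAction.IsPretransitive (Equiv.Perm V) (Set.powersetCard V k) :=
    Set.powersetCard.isPretransitive
  obtain ⟨σ, hσ⟩ :=
    exists_forall_smul_notMem_of_card_mul_card_lt_s5 (G := Equiv.Perm V) card_kEdges_mul_lt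
  exact ⟨σ, fun s hs hσs ↦ hσ ⟨s, h₁ s hs⟩ (mem_subtype.2 hs) (mem_subtype.2 hσs)⟩

theorem stmt_5_general {V₁ V₂ : Type*} [DecidableEq V₂] (k : ℕ) (e : V₁ ≃ V₂)
    (E₁ : Finset (Finset V₁)) (E₂ : Finset (Finset V₂)) (h₁ : Uniform k E₁)
    (h : (#E₁ * #E₂ : ℕ∞) < (Set.powersetCard V₂ k).encard) :
    Packs E₁ E₂ :=
  .of_map_finsetCongr e <|
    (h₁.map_finsetCongr e).packs_of_card_mul_card_lt_s5 (by rwa [card_map])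

/-- if `|E(H₁)|·|E(H₂)| < C(n,k)` then the two `k`-uniform hypergraphs
on `n` vertices pack. -/
theorem stmt_5 (k n : ℕ)
    (E₁ E₂ : Finset (Finset (Fin n))) (h₁ : Uniform k E₁) (h₂ : Uniform k E₂)
    (h : E₁.card * E₂.card < n.choose k) :
    Packs E₁ E₂ := by
  refine stmt_5_general k (.refl _) E₁ E₂ h₁ ?_
  rw [Set.encard, ENat.card_eq_coe_natCard, Set.powersetCard.card, Nat.card_fin]
  exact_mod_cast h
end

section
/- Let G₁ and G₂ be two graphs (2-uniform hypergraphs) on n vertices. If |E(G₁)|·|E(G₂)| < C(n,2), then G₁ and G₂ pack. -/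
open Finset

/-!
After identifying the two vertex sets, let the symmetric group act on the `n.choose k` many
`k`-sets. The permutations carrying a given edge of the first hypergraph onto a given edge of the
second form a coset of the stabilizer of a `k`-set, a subgroup of index `n.choose k`. Fewer than
`n.choose k` such cosets cannot cover the symmetric group, and a permutation outside all of them
is a packing.
-/

open MulAction Pointwise

theorem exists_forall_smul_ne {G X ι κ : Type*} [Group G] [MulAction G X] [IsPretransitive G X]
    [Fintype ι] [Fintype κ] (a : ι → X) (b : κ → X)
    (hcard : ((Fintype.card ι * Fintype.card κ : ℕ) : ℕ∞) < ENat.card X) :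
    ∃ g : G, ∀ i j, g • a i ≠ b j := by
  by_contra! hmeet
  choose t ht using fun p : ι × κ ↦ exists_smul_eq G (a p.1) (b p.2)
  have hcover : ⋃ p ∈ univ, t p • (stabilizer G (a p.1) : Set G) = Set.univ := by
    refine Set.eq_univ_of_forall fun g ↦ ?_
    obtain ⟨i, j, hij⟩ := hmeet g
    refine Set.mem_biUnion (mem_univ (i, j)) (Set.mem_smul_set_iff_inv_smul_mem.mpr ?_)
    change ((t (i, j))⁻¹ * g) • a i = a i
    rw [mul_smul, hij, inv_smul_eq_iff, ht]
  have hsum := Subgroup.one_le_sum_inv_index_of_leftCoset_cover hcover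
  simp only [index_stabilizer_of_transitive, sum_const, card_univ, Fintype.card_prod,
    nsmul_eq_mul, ← div_eq_mul_inv] at hsum
  have hpos : 0 < Nat.card X := Nat.pos_of_ne_zero fun hzero ↦ by norm_num [hzero] at hsum
  have : Finite X := Nat.finite_of_card_ne_zero hpos.ne'
  rw [ENat.card_eq_coe_natCard, Nat.cast_lt] at hcard
  rw [one_le_div (mod_cast hpos), Nat.cast_le] at hsum
  exact hcard.not_ge hsum

theorem stmt_7_general {V₁ V₂ : Type*} [Fintype V₁] [Fintype V₂] [DecidableEq V₂] {k : ℕ}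
    (hV : Fintype.card V₁ = Fintype.card V₂) {E₁ : Finset (Finset V₁)} {E₂ : Finset (Finset V₂)}
    (h₁ : Uniform k E₁) (h₂ : Uniform k E₂)
    (h : E₁.card * E₂.card < (Fintype.card V₂).choose k) :
    Packs E₁ E₂ := by
  let f : V₁ ≃ V₂ := Fintype.equivOfCardEq hV
  let a : E₁ → Set.powersetCard V₂ k := fun e ↦
    ⟨e.1.map f.toEmbedding, (card_map _).trans (h₁ e e.2)⟩
  let b : E₂ → Set.powersetCard V₂ k := fun e ↦ ⟨e, h₂ e e.2⟩
  have : IsPretransitive (Equiv.Perm V₂) (Set.powersetCard V₂ k) := Set.powersetCard.isPretransitive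
  obtain ⟨σ, hσ⟩ := exists_forall_smul_ne (G := Equiv.Perm V₂) a b <| by
    simpa only [Fintype.card_coe, ENat.card_eq_coe_natCard, Set.powersetCard.card,
      ← Nat.card_eq_fintype_card (α := V₂), Nat.cast_lt] using h
  refine ⟨f.trans σ, fun e he hmem ↦ hσ ⟨e, he⟩ ⟨_, hmem⟩ (Subtype.ext ?_)⟩
  simp [a, b, map_eq_image, Finset.smul_finset_def, image_image, Function.comp_def]

/-- if `|E(G₁)|·|E(G₂)| < C(n,2)` then the two graphs (2-uniform
hypergraphs) on `n` vertices pack. -/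
theorem stmt_7 (n : ℕ)
    (E₁ E₂ : Finset (Finset (Fin n))) (h₁ : Uniform 2 E₁) (h₂ : Uniform 2 E₂)
    (h : E₁.card * E₂.card < n.choose 2) :
    Packs E₁ E₂ :=
  stmt_7_general rfl h₁ h₂ (by simpa only [Fintype.card_fin] using h)
end

section
/- Let G₁ and G₂ be two graphs (2-uniform hypergraphs) on n vertices. If 2·Δ(G₁)·Δ(G₂) < n, then G₁ and G₂ pack. -/
open Finset

/-!
This is the Sauer–Spencer argument. Among all bijections of the vertex sets choose one whose set of
conflicts is minimal, a conflict being a pair that is adjacent in both graphs after identification.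
If `u v` is a conflict, exchange the images of `u` and of some vertex `w`. A pair that was not in
conflict before can become so only if `w` is reached from `u` by an edge of one graph followed by an
edge of the other. At most `2 * Δ₁ * Δ₂` walks of this kind start at `u`, and two of them, along
`u v` and back, end at `u` itself. So some `w` other than `v` is not reached, and exchanging it with
`u` removes the conflict `u v` without creating another.
-/

section SauerSpencer

variable {V : Type*}

section Swap

variable [DecidableEq V] {G H : SimpleGraph V} {u v w : V}

lemma inf_comap_swap_le (hGH : ∀ x, G.Adj u x → ¬H.Adj x w)
    (hHG : ∀ x, H.Adj u x → ¬G.Adj x w) :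
    G ⊓ H.comap (Equiv.swap u w) ≤ G ⊓ H := by
  have adj_of_exchanged : ∀ {a b}, a = u ∨ a = w → G.Adj a b →
      H.Adj (Equiv.swap u w a) (Equiv.swap u w b) → H.Adj a b := by
    rintro a b (rfl | rfl) hG hH
    · by_cases hb : b = w
      · simpa [hb, H.adj_comm] using hH
      · rw [Equiv.swap_apply_left, Equiv.swap_apply_of_ne_of_ne hG.ne' hb] at hH
        exact absurd hH.symm (hGH b hG)
    · by_cases hb : b = u
      · simpa [hb, H.adj_comm] using hH
      · rw [Equiv.swap_apply_right, Equiv.swap_apply_of_ne_of_ne hb hG.ne'] at hH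
        exact absurd hG.symm (hHG b hH)
  rintro a b ⟨hG, hH⟩
  refine ⟨hG, ?_⟩
  by_cases ha : a = u ∨ a = w
  · exact adj_of_exchanged ha hG hH
  by_cases hb : b = u ∨ b = w
  · exact (adj_of_exchanged hb hG.symm hH.symm).symm
  rw [not_or] at ha hb
  simpa [Equiv.swap_apply_of_ne_of_ne, ha, hb] using hH

lemma inf_comap_swap_lt (hGH : ∀ x, G.Adj u x → ¬H.Adj x w) (hHG : ∀ x, H.Adj u x → ¬G.Adj x w)
    (hG : G.Adj u v) (hH : H.Adj u v) (hwv : w ≠ v) :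
    G ⊓ H.comap (Equiv.swap u w) < G ⊓ H := by
  refine (inf_comap_swap_le hGH hHG).lt_of_not_ge fun hle => ?_
  have hadj : H.Adj w v := by
    simpa [Equiv.swap_apply_of_ne_of_ne hG.ne' hwv.symm] using (hle ⟨hG, hH⟩).2
  exact hGH v hG hadj.symm

end Swap

variable [Fintype V]

/-- The set of endpoints of the walks that start at `u` and consist of an edge of `G` followed by an
edge of `H`. Exchanging `u` with a vertex of this set may create a conflict between `G` and `H`. -/
def mixedNeighborFinset [DecidableEq V] (G H : SimpleGraph V) [DecidableRel G.Adj]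
    [DecidableRel H.Adj] (u : V) : Finset V :=
  (G.neighborFinset u).biUnion fun x => H.neighborFinset x

section MixedNeighbors

variable [DecidableEq V] {G H : SimpleGraph V} [DecidableRel G.Adj] [DecidableRel H.Adj] {u v w : V}

lemma mem_mixedNeighborFinset :
    w ∈ mixedNeighborFinset G H u ↔ ∃ x, G.Adj u x ∧ H.Adj x w := by
  simp [mixedNeighborFinset]

lemma card_mixedNeighborFinset_le (G H : SimpleGraph V) [DecidableRel G.Adj] [DecidableRel H.Adj]
    (u : V) : #(mixedNeighborFinset G H u) ≤ G.maxDegree * H.maxDegree :=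
  calc
    #(mixedNeighborFinset G H u) ≤ G.degree u * H.maxDegree :=
      card_biUnion_le_card_mul _ _ _ fun x _ => H.degree_le_maxDegree x
    _ ≤ G.maxDegree * H.maxDegree := Nat.mul_le_mul_right _ (G.degree_le_maxDegree u)

lemma exists_ne_notMem_mixedNeighborFinset
    (h : 2 * G.maxDegree * H.maxDegree < Fintype.card V) (hG : G.Adj u v) (hH : H.Adj u v) :
    ∃ w ≠ v, w ∉ mixedNeighborFinset G H u ∧ w ∉ mixedNeighborFinset H G u := by
  set A := mixedNeighborFinset G H u
  set B := mixedNeighborFinset H G u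
  have hA : #A ≤ G.maxDegree * H.maxDegree := card_mixedNeighborFinset_le G H u
  have hB : #B ≤ G.maxDegree * H.maxDegree :=
    (card_mixedNeighborFinset_le H G u).trans_eq (mul_comm _ _)
  have hu : u ∈ A ∩ B := mem_inter.2
    ⟨mem_mixedNeighborFinset.2 ⟨v, hG, hH.symm⟩, mem_mixedNeighborFinset.2 ⟨v, hH, hG.symm⟩⟩
  have hcard : #(insert v (A ∪ B)) < #(univ : Finset V) := by
    rw [mul_assoc] at h
    have hinter : 0 < #(A ∩ B) := card_pos.2 ⟨u, hu⟩
    have hunion : #(A ∪ B) + #(A ∩ B) = #A + #B := card_union_add_card_inter A B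
    have hinsert : #(insert v (A ∪ B)) ≤ #(A ∪ B) + 1 := card_insert_le v (A ∪ B)
    rw [card_univ]
    lia
  obtain ⟨w, -, hw⟩ := exists_mem_notMem_of_card_lt_card hcard
  simp only [mem_insert, mem_union, not_or] at hw
  exact ⟨w, hw⟩

lemma exists_inf_comap_swap_lt (h : 2 * G.maxDegree * H.maxDegree < Fintype.card V)
    (hG : G.Adj u v) (hH : H.Adj u v) :
    ∃ w, G ⊓ H.comap (Equiv.swap u w) < G ⊓ H := by
  obtain ⟨w, hwv, hGH, hHG⟩ := exists_ne_notMem_mixedNeighborFinset h hG hH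
  simp only [mem_mixedNeighborFinset, not_exists, not_and] at hGH hHG
  exact ⟨w, inf_comap_swap_lt hGH hHG hG hH hwv⟩

end MixedNeighbors

theorem exists_equiv_disjoint_comap {W : Type*} [Fintype W] (G : SimpleGraph V) (H : SimpleGraph W)
    [DecidableRel G.Adj] [DecidableRel H.Adj] (hcard : Fintype.card V = Fintype.card W)
    (h : 2 * G.maxDegree * H.maxDegree < Fintype.card V) :
    ∃ f : V ≃ W, Disjoint G (H.comap f) := by
  classical
  obtain ⟨f, hmin⟩ := exists_minimalFor_of_wellFoundedLT (fun _ : V ≃ W => True)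
    (fun f => G ⊓ H.comap f) ⟨Fintype.equivOfCardEq hcard, trivial⟩
  refine ⟨f, SimpleGraph.disjoint_left.2 fun u v hG hH => ?_⟩
  have hdeg : (H.comap f).maxDegree = H.maxDegree := (SimpleGraph.Iso.comap f H).maxDegree_eq
  obtain ⟨w, hw⟩ := exists_inf_comap_swap_lt (H := H.comap f) (by rwa [hdeg]) hG hH
  exact hmin.not_lt (j := (Equiv.swap u w).trans f) trivial hw

end SauerSpencer

section PairGraph

/-- The graph formed by the two-element members of a family `E` of finite sets. It turns a
`2`-uniform hypergraph into a `SimpleGraph`; members of any other size are ignored. -/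
def pairGraph {V : Type*} [DecidableEq V] (E : Finset (Finset V)) : SimpleGraph V where
  Adj a b := a ≠ b ∧ {a, b} ∈ E
  symm.symm a b h := ⟨h.1.symm, pair_comm a b ▸ h.2⟩
  loopless.irrefl _ h := h.1 rfl

variable {V W : Type*} [DecidableEq V]

instance (E : Finset (Finset V)) : DecidableRel (pairGraph E).Adj :=
  fun a b => inferInstanceAs (Decidable (a ≠ b ∧ {a, b} ∈ E))

lemma card_filter_superset_le_maxDeg [Fintype V] (E : Finset (Finset V)) (U : Finset V) :
    #{e ∈ E | U ⊆ e} ≤ maxDeg #U E :=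
  le_sup (f := fun U => #{e ∈ E | U ⊆ e}) (mem_powersetCard_univ.2 rfl)

lemma maxDegree_pairGraph_le [Fintype V] (E : Finset (Finset V)) :
    (pairGraph E).maxDegree ≤ maxDeg 1 E := by
  refine SimpleGraph.maxDegree_le_of_forall_degree_le _ _ fun a => ?_
  refine le_trans ?_ (card_filter_superset_le_maxDeg E {a})
  refine card_le_card_of_injOn (fun b => {a, b}) (fun b hb => ?_) fun b hb c _ hbc => ?_
  · have hab : (pairGraph E).Adj a b := by simpa using hb
    simpa using hab.2
  · have hab : (pairGraph E).Adj a b := by simpa using hb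
    have hb' : b ∈ ({a, c} : Finset V) := (show ({a, b} : Finset V) = {a, c} from hbc) ▸ by simp
    simpa [hab.ne'] using hb'

lemma packs_of_disjoint_comap_pairGraph [DecidableEq W] {E₁ : Finset (Finset V)}
    {E₂ : Finset (Finset W)} (h₁ : Uniform 2 E₁) {f : V ≃ W}
    (hf : Disjoint (pairGraph E₁) ((pairGraph E₂).comap f)) : Packs E₁ E₂ := by
  refine ⟨f, fun e he hfe => ?_⟩
  obtain ⟨a, b, hab, rfl⟩ := card_eq_two.1 (h₁ e he)
  rw [image_insert, image_singleton] at hfe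
  exact SimpleGraph.disjoint_left.1 hf a b ⟨hab, he⟩ ⟨f.injective.ne hab, hfe⟩

end PairGraph

theorem stmt_8_general {V W : Type*} [Fintype V] [Fintype W] [DecidableEq V] [DecidableEq W]
    (hcard : Fintype.card V = Fintype.card W) (E₁ : Finset (Finset V)) (E₂ : Finset (Finset W))
    (h₁ : Uniform 2 E₁) (h : 2 * maxDeg 1 E₁ * maxDeg 1 E₂ < Fintype.card V) :
    Packs E₁ E₂ := by
  have hdeg : 2 * (pairGraph E₁).maxDegree * (pairGraph E₂).maxDegree < Fintype.card V :=
    lt_of_le_of_lt (by gcongr <;> exact maxDegree_pairGraph_le _) h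
  obtain ⟨f, hf⟩ := exists_equiv_disjoint_comap (pairGraph E₁) (pairGraph E₂) hcard hdeg
  exact packs_of_disjoint_comap_pairGraph h₁ hf

/-- if `2·Δ(G₁)·Δ(G₂) < n` then the two graphs (2-uniform hypergraphs)
on `n` vertices pack. -/
theorem stmt_8 (n : ℕ)
    (E₁ E₂ : Finset (Finset (Fin n))) (h₁ : Uniform 2 E₁) (h₂ : Uniform 2 E₂)
    (h : 2 * maxDeg 1 E₁ * maxDeg 1 E₂ < n) :
    Packs E₁ E₂ := by
  exact stmt_8_general rfl E₁ E₂ h₁ (by rwa [Fintype.card_fin])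
end

section
/- Let k = 2α be even and n ≥ k. Let H₁ be the k-uniform hypergraph on n vertices consisting of a fixed α-element vertex set K such that the edges of H₁ are exactly the sets K ∪ S where S ranges over all α-element subsets of V(H₁) \ K. Let H₂ be any k-uniform hypergraph on n vertices whose edge set is an α-(n,k,1)-design. Then H₁ and H₂ do not pack. -/
open Finset

/-!
Let `f` be a bijection of the vertex sets. The image of `K` has `α` vertices, so it lies in an
edge `e` of the design, and pulling `e` back along `f` gives a `2α`-set containing `K`, which is an
edge of `H₁`. Thus every bijection sends some edge of `H₁` to an edge of `H₂`.
-/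

theorem IsDesign.exists_mem_superset {V : Type*} [Fintype V] [DecidableEq V] {t k lam : ℕ}
    {T : Finset (Finset V)} (hT : IsDesign t k lam T) (hlam : lam ≠ 0) {S : Finset V}
    (hS : S.card = t) : ∃ e ∈ T, S ⊆ e := by
  have hcard : (T.filter fun e => S ⊆ e).card ≠ 0 := by rwa [hT.2 S hS]
  exact filter_nonempty_iff.mp (card_ne_zero.mp hcard)

theorem exists_subset_compl_eq_union_iff {V : Type*} [Fintype V] [DecidableEq V] {s : ℕ}
    {K e : Finset V} :
    (∃ S : Finset V, S ⊆ Kᶜ ∧ S.card = s ∧ e = K ∪ S) ↔ K ⊆ e ∧ e.card = K.card + s := by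
  constructor
  · rintro ⟨S, hS, rfl, rfl⟩
    exact ⟨subset_union_left, card_union_of_disjoint (subset_compl_iff_disjoint_left.mp hS)⟩
  · rintro ⟨hKe, hcard⟩
    refine ⟨e \ K, subset_compl_iff_disjoint_left.mpr disjoint_sdiff, ?_,
      (union_sdiff_of_subset hKe).symm⟩
    rw [card_sdiff_of_subset hKe, hcard, Nat.add_sub_cancel_left]

theorem stmt_10_general {V₁ V₂ : Type*} [DecidableEq V₂] {k : ℕ} {K : Finset V₁}
    {E₁ : Finset (Finset V₁)} {E₂ : Finset (Finset V₂)}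
    (hE₁ : ∀ e : Finset V₁, K ⊆ e → e.card = k → e ∈ E₁) (hE₂ : Uniform k E₂)
    (hcover : ∀ S : Finset V₂, S.card = K.card → ∃ e ∈ E₂, S ⊆ e) :
    ¬ Packs E₁ E₂ := by
  rintro ⟨f, hf⟩
  obtain ⟨e, he, hKe⟩ := hcover (K.map f.toEmbedding) (card_map _)
  have hpreimage : e.map f.symm.toEmbedding ∈ E₁ :=
    hE₁ _ (subset_map_symm.mpr hKe) ((card_map _).trans (hE₂ e he))
  have himage : (e.map f.symm.toEmbedding).image f = e :=
    (map_eq_image f.toEmbedding _).symm.trans (f.finsetCongr.apply_symm_apply e)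
  exact hf _ hpreimage (by rwa [himage])

/-- for even `k = 2α` and `n ≥ k`, the hypergraph `H₁` whose edges are
exactly the sets `K ∪ S` with `S` an `α`-subset of the complement of a fixed `α`-set `K`,
and any hypergraph `H₂` whose edge set is an `α-(n,k,1)` design, do not pack. -/
theorem stmt_10 (α k n : ℕ) (hk : k = 2 * α) (hn : k ≤ n)
    (K : Finset (Fin n)) (hK : K.card = α)
    (E₁ : Finset (Finset (Fin n)))
    (hE₁ : ∀ e : Finset (Fin n),
      e ∈ E₁ ↔ ∃ S : Finset (Fin n), S ⊆ Kᶜ ∧ S.card = α ∧ e = K ∪ S)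
    (E₂ : Finset (Finset (Fin n))) (hE₂ : IsDesign α k 1 E₂) :
    ¬ Packs E₁ E₂ := by
  subst hk hK
  have hsuperset (e : Finset (Fin n)) (hKe : K ⊆ e) (he : e.card = 2 * K.card) : e ∈ E₁ :=
    (hE₁ e).mpr <| exists_subset_compl_eq_union_iff.mpr ⟨hKe, he.trans (two_mul _)⟩
  exact stmt_10_general hsuperset hE₂.1 fun _ => hE₂.exists_mem_superset one_ne_zero
end

section
/- Let k ≥ 3, let t ≥ 1 and n be such that t divides n and (k−2)t + 1 ≤ n. Let H₁ be the k-uniform hypergraph on n vertices consisting of a set W of (k−2)t + 1 vertices whose edges are all k-element subsets of W together with all sets of the form S ∪ {v} where S is a (k−1)-element subset of W and v ∈ V(H₁) \ W. Let H₂ be a k-uniform hypergraph on n vertices which is a disjoint union of t copies of a hypergraph H whose edge set is a (k−1)-(n/t, k, 1)-design. Then H₁ and H₂ do not pack. -/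
open Finset

/-! By pigeonhole, any bijection sends some `k - 1` vertices of `W` into a single copy of the
design. The design has an edge through their images, and the preimage of that edge is a `k`-set with
at least `k - 1` vertices in `W`, hence an edge of the first hypergraph. -/

section Pigeonhole

variable {V V₁ V₂ ι : Type*} [Fintype ι]

theorem exists_monochromatic_subset_of_mul_lt_card {r : ℕ} {W : Finset V} (c : V → ι)
    (hW : r * Fintype.card ι < #W) : ∃ i, ∃ S ⊆ W, #S = r + 1 ∧ ∀ v ∈ S, c v = i := by
  classical
  obtain ⟨i, -, hi⟩ := exists_lt_card_fiber_of_mul_lt_card_of_maps_to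
    (s := W) (t := univ) (f := c) (fun _ _ => mem_univ _) (by rwa [card_univ, mul_comm])
  obtain ⟨S, hS, hScard⟩ := exists_subset_card_eq (Nat.succ_le_of_lt hi)
  exact ⟨i, S, hS.trans (filter_subset _ _), hScard, fun v hv => (mem_filter.1 (hS hv)).2⟩

theorem not_packs_of_forall_monochromatic_exists_superset [DecidableEq V₂] {r k : ℕ}
    {W : Finset V₁} {E₁ : Finset (Finset V₁)} {E₂ : Finset (Finset V₂)} (c : V₂ → ι)
    (hW : r * Fintype.card ι < #W)
    (hE₁ : ∀ S ⊆ W, #S = r + 1 → ∀ e, S ⊆ e → #e = k → e ∈ E₁)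
    (hE₂ : ∀ i, ∀ S : Finset V₂, #S = r + 1 → (∀ v ∈ S, c v = i) → ∃ e ∈ E₂, S ⊆ e ∧ #e = k) :
    ¬ Packs E₁ E₂ := by
  classical
  rintro ⟨f, hf⟩
  obtain ⟨i, S, hSW, hScard, hSi⟩ := exists_monochromatic_subset_of_mul_lt_card (c ∘ f) hW
  obtain ⟨e, he, hSe, hecard⟩ := hE₂ i (S.map f.toEmbedding) (by rwa [card_map])
    (forall_mem_map.2 hSi)
  have image_preimage : (e.map f.symm.toEmbedding).image f = e := by
    simp only [map_eq_image, image_image, Equiv.coe_toEmbedding, Equiv.self_comp_symm, image_id]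
  have preimage_mem : e.map f.symm.toEmbedding ∈ E₁ :=
    hE₁ S hSW hScard _ (by simpa [subset_map_symm] using hSe) (by rwa [card_map])
  exact hf _ preimage_mem (by rwa [image_preimage])

end Pigeonhole

theorem subset_or_exists_eq_insert_notMem {V : Type*} [DecidableEq V] {S W e : Finset V}
    (hSW : S ⊆ W) (hSe : S ⊆ e) (hcard : #e = #S + 1) :
    e ⊆ W ∨ ∃ v, v ∉ W ∧ e = insert v S := by
  obtain ⟨v, -, rfl⟩ := exists_eq_insert_iff.2 ⟨hSe, hcard.symm⟩
  by_cases hv : v ∈ W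
  · exact .inl (insert_subset hv hSW)
  · exact .inr ⟨v, hv, rfl⟩

namespace IsDesign

variable {ι X : Type*} [Fintype X] [DecidableEq X] {r k lam : ℕ} {H : Finset (Finset X)}

theorem exists_superset (hH : IsDesign r k lam H) (hlam : lam ≠ 0) {S : Finset X} (hS : #S = r) :
    ∃ e ∈ H, S ⊆ e ∧ #e = k := by
  obtain ⟨e, he⟩ := card_ne_zero.1 ((hH.2 S hS).trans_ne hlam)
  obtain ⟨heH, hSe⟩ := mem_filter.1 he
  exact ⟨e, heH, hSe, hH.1 e heH⟩

theorem exists_image_mk_superset [DecidableEq ι] (hH : IsDesign r k lam H) (hlam : lam ≠ 0) {i : ι}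
    {S : Finset (ι × X)} (hS : #S = r) (hSi : ∀ v ∈ S, v.1 = i) :
    ∃ e ∈ H, S ⊆ e.image (Prod.mk i) ∧ #(e.image (Prod.mk i)) = k := by
  have snd_injOn : Set.InjOn Prod.snd (S : Set (ι × X)) := fun v hv w hw h =>
    Prod.ext ((hSi v hv).trans (hSi w hw).symm) h
  obtain ⟨e, he, hSe, hecard⟩ :=
    hH.exists_superset hlam ((card_image_of_injOn snd_injOn).trans hS)
  refine ⟨e, he, fun v hv => ?_, ?_⟩
  · exact mem_image.2 ⟨v.2, hSe (mem_image_of_mem _ hv), Prod.ext (hSi v hv).symm rfl⟩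
  · rwa [card_image_of_injective _ (Prod.mk_right_injective i)]

end IsDesign

theorem stmt_11_general {V ι X : Type*} [DecidableEq V] [Fintype ι] [DecidableEq ι]
    [Fintype X] [DecidableEq X] {k lam : ℕ} (hk : 2 ≤ k) (hlam : lam ≠ 0)
    {W : Finset V} (hW : (k - 2) * Fintype.card ι < #W) {E₁ : Finset (Finset V)}
    (hE₁ : ∀ e : Finset V,
      (e ⊆ W ∧ #e = k) ∨ (∃ S ⊆ W, #S = k - 1 ∧ ∃ v, v ∉ W ∧ e = insert v S) → e ∈ E₁)
    {H : ι → Finset (Finset X)} (hH : ∀ i, IsDesign (k - 1) k lam (H i))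
    {E₂ : Finset (Finset (ι × X))} (hE₂ : ∀ i, ∀ e ∈ H i, e.image (Prod.mk i) ∈ E₂) :
    ¬ Packs E₁ E₂ := by
  have hk' : k - 2 + 1 = k - 1 := by omega
  refine not_packs_of_forall_monochromatic_exists_superset (k := k) Prod.fst hW ?_ ?_
  · intro S hSW hS e hSe he
    refine hE₁ e ((subset_or_exists_eq_insert_notMem hSW hSe (by omega)).imp (⟨·, he⟩) ?_)
    exact fun hv => ⟨S, hSW, hS.trans hk', hv⟩
  · intro i S hS hSi
    obtain ⟨e, he, hSe, hecard⟩ := (hH i).exists_image_mk_superset hlam (hS.trans hk') hSi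
    exact ⟨_, hE₂ i e he, hSe, hecard⟩

/-- for `k ≥ 3`, `t ≥ 1`, `t ∣ n`, `(k−2)t + 1 ≤ n`, the hypergraph `H₁`
(all `k`-subsets of a `((k−2)t+1)`-set `W`, plus all sets `S ∪ {v}` with `S` a
`(k−1)`-subset of `W` and `v ∉ W`) and the hypergraph `H₂` which is a disjoint union of
`t` copies of a hypergraph `H` whose edge set is a `(k−1)-(n/t,k,1)` design, do not pack. -/
theorem stmt_11 (k t n : ℕ) (hk : 3 ≤ k) (ht : 1 ≤ t) (htn : t ∣ n)
    (hWn : (k - 2) * t + 1 ≤ n)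
    (W : Finset (Fin n)) (hW : W.card = (k - 2) * t + 1)
    (E₁ : Finset (Finset (Fin n)))
    (hE₁ : ∀ e : Finset (Fin n), e ∈ E₁ ↔
      (e ⊆ W ∧ e.card = k) ∨
      (∃ S : Finset (Fin n), S ⊆ W ∧ S.card = k - 1 ∧ ∃ v : Fin n, v ∉ W ∧ e = insert v S))
    (H : Finset (Finset (Fin (n / t)))) (hH : IsDesign (k - 1) k 1 H)
    (E₂ : Finset (Finset (Fin t × Fin (n / t))))
    (hE₂ : ∀ e : Finset (Fin t × Fin (n / t)),
      e ∈ E₂ ↔ ∃ i : Fin t, ∃ e₀ ∈ H, e = e₀.image (fun v => (i, v))) :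
    ¬ Packs E₁ E₂ := by
  exact stmt_11_general (by omega) one_ne_zero (by simp [hW]) (fun e => (hE₁ e).2) (fun _ => hH)
    fun i e he => (hE₂ _).2 ⟨i, e, he, rfl⟩
end

section
/- For every n ≥ 2, m(n,2) = ⌈3n/2⌉ − 1; that is, any two graphs on n vertices with |E(G₁)| + |E(G₂)| ≤ ⌈3n/2⌉ − 2 pack, and there exist two graphs G₁, G₂ on n vertices with |E(G₁)| + |E(G₂)| = ⌈3n/2⌉ − 1 that do not pack. -/
open Finset

/-!
Induction on the number `n` of vertices. If one of the graphs has at most `n / 2` edges, the product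
of the numbers of edges is less than `n.choose 2`, so a random bijection maps fewer than one edge to
an edge on average. Otherwise match up to four vertices of the graphs in such a way that each pair
contains a vertex with no unmatched neighbours; this keeps the edge bound if the matched vertices
meet at least `3 / 2` edges per pair. An isolated vertex is matched with a vertex of degree at least
two, and a component `K₂` with a leaf and a vertex not adjacent to it. In the remaining case both
graphs have two leaves with distinct neighbours, and leaves are matched with neighbours of leaves,
crosswise so that no edge between a leaf and its neighbour is preserved.

For the converse, a star on all vertices does not pack with a graph without isolated vertices.
-/

section Averaging

variable {G X : Type*} [Group G] [MulAction G X] [MulAction.IsPretransitive G X] [Fintype X]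

theorem card_filter_smul_eq_mul_card [Fintype G] [DecidableEq X] (x y : X) :
    #{g : G | g • x = y} * Fintype.card X = Fintype.card G := by
  have fiber_card (z : X) : #{g : G | g • x = z} = #{g : G | g • x = y} := by
    obtain ⟨k, rfl⟩ := MulAction.exists_smul_eq G z y
    exact card_equiv (Equiv.mulLeft k) fun g => by simp [mul_smul]
  calc #{g : G | g • x = y} * Fintype.card X = ∑ z : X, #{g : G | g • x = z} := by
        simp [fiber_card, mul_comm]
    _ = Fintype.card G := (card_eq_sum_card_fiberwise fun g _ => mem_univ (g • x)).symm

theorem exists_smul_notMem_of_card_mul_card_lt [Finite G] (A B : Finset X)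
    (hAB : #A * #B < Fintype.card X) : ∃ g : G, ∀ x ∈ A, g • x ∉ B := by
  classical
  have := Fintype.ofFinite G
  by_contra! hmeet
  have hcover : (univ : Finset G) ⊆ (A ×ˢ B).biUnion fun p => {g : G | g • p.1 = p.2} := by
    intro g _
    obtain ⟨x, hx, hgx⟩ := hmeet g
    exact mem_biUnion.2 ⟨(x, g • x), mk_mem_product hx hgx, by simp⟩
  have : Fintype.card G * Fintype.card X ≤ #A * #B * Fintype.card G :=
    calc Fintype.card G * Fintype.card X
      _ ≤ (∑ p ∈ A ×ˢ B, #{g : G | g • p.1 = p.2}) * Fintype.card X :=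
        Nat.mul_le_mul_right _ ((card_le_card hcover).trans card_biUnion_le)
      _ = #A * #B * Fintype.card G := by
        rw [sum_mul, sum_congr rfl fun p _ => card_filter_smul_eq_mul_card p.1 p.2, sum_const,
          card_product, smul_eq_mul]
  nlinarith [Fintype.card_pos (α := G)]

end Averaging

theorem packs_of_card_mul_card_lt_choose {V : Type*} [Fintype V] [DecidableEq V] {k : ℕ}
    {E₁ E₂ : Finset (Finset V)} (h₁ : Uniform k E₁) (h₂ : Uniform k E₂)
    (hcard : #E₁ * #E₂ < (Fintype.card V).choose k) : Packs E₁ E₂ := by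
  classical
  have := Set.powersetCard.isPretransitive (α := V) (n := k)
  have card_subtype {E : Finset (Finset V)} (hE : Uniform k E) :
      #(E.subtype (· ∈ Set.powersetCard V k)) = #E := by
    exact (Finset.card_subtype _ E).trans (congrArg card (filter_true_of_mem hE))
  obtain ⟨g, hg⟩ := exists_smul_notMem_of_card_mul_card_lt (G := Equiv.Perm V)
    (E₁.subtype (· ∈ Set.powersetCard V k)) (E₂.subtype (· ∈ Set.powersetCard V k)) (by
      rw [card_subtype h₁, card_subtype h₂]
      rwa [← Nat.card_eq_fintype_card, Set.powersetCard.card, Nat.card_eq_fintype_card])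
  exact ⟨g, fun e he hge => hg ⟨e, h₁ e he⟩ (mem_subtype.2 he) (mem_subtype.2 hge)⟩

/-- Two graphs pack if some bijection of their vertex sets maps every edge of the first to a
non-edge of the second: the form of `Packs` used in the induction on the number of vertices. -/
def GraphPacks {V W : Type*} (G : SimpleGraph V) (H : SimpleGraph W) : Prop :=
  ∃ f : V ≃ W, ∀ ⦃x y⦄, G.Adj x y → ¬ H.Adj (f x) (f y)

/-- The edges of a graph as two-element vertex sets, which turns it into a hypergraph. -/
noncomputable def edgeFamily {V : Type*} [Finite V] [DecidableEq V] (G : SimpleGraph V) :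
    Finset (Finset V) :=
  G.edgeSet.toFinite.toFinset.image Sym2.toFinset

/-- The vertex `x` is a leaf with neighbour `y`. -/
def IsLeafAt {V : Type*} (G : SimpleGraph V) (x y : V) : Prop :=
  ∀ z, G.Adj x z ↔ z = y

/-- Matching `p i` with `q i` for all `i` preserves no edge, and in each matched pair one vertex has
all its neighbours among the matched vertices. The matching then extends by every packing of the
induced subgraphs on the unmatched vertices. -/
structure IsPartialPacking {ι V W : Type*} (G : SimpleGraph V) (H : SimpleGraph W)
    (p : ι → V) (q : ι → W) : Prop where
  injective_left : Function.Injective p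
  injective_right : Function.Injective q
  not_adj : ∀ i j, G.Adj (p i) (p j) → ¬ H.Adj (q i) (q j)
  closed : ∀ i, (∀ z, G.Adj (p i) z → z ∈ Set.range p) ∨ ∀ z, H.Adj (q i) z → z ∈ Set.range q

/-- Some nonempty partial packing deletes, from the two graphs together, at least `3 / 2` edges per
pair of matched vertices: deleting it preserves the edge bound of the packing theorem. -/
def IsReducible {V W : Type*} (G : SimpleGraph V) (H : SimpleGraph W) : Prop :=
  ∃ k > 0, ∃ (p : Fin k → V) (q : Fin k → W), IsPartialPacking G H p q ∧
    2 * ((G.induce (Set.range p)ᶜ).edgeSet.ncard + (H.induce (Set.range q)ᶜ).edgeSet.ncard) +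
      3 * k ≤ 2 * (G.edgeSet.ncard + H.edgeSet.ncard)

section Packing

variable {ι V W : Type*} {G : SimpleGraph V} {H : SimpleGraph W}

theorem GraphPacks.symm (h : GraphPacks G H) : GraphPacks H G := by
  obtain ⟨f, hf⟩ := h
  exact ⟨f.symm, fun x y hxy hG => hf hG (by simpa using hxy)⟩

theorem graphPacks_bot (e : V ≃ W) : GraphPacks (⊥ : SimpleGraph V) H :=
  ⟨e, fun _ _ h => h.elim⟩

theorem IsPartialPacking.symm {p : ι → V} {q : ι → W} (h : IsPartialPacking G H p q) :
    IsPartialPacking H G q p :=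
  ⟨h.injective_right, h.injective_left, fun i j hH hG => h.not_adj i j hG hH,
    fun i => (h.closed i).symm⟩

theorem IsReducible.symm (h : IsReducible G H) : IsReducible H G := by
  obtain ⟨k, hk, p, q, hpq, hedges⟩ := h
  exact ⟨k, hk, q, p, hpq.symm, by omega⟩

theorem IsPartialPacking.graphPacks {p : ι → V} {q : ι → W} (h : IsPartialPacking G H p q)
    (hrest : GraphPacks (G.induce (Set.range p)ᶜ) (H.induce (Set.range q)ᶜ)) :
    GraphPacks G H := by
  classical
  obtain ⟨e, he⟩ := hrest
  let matched : Set.range p ≃ Set.range q :=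
    (Equiv.ofInjective p h.injective_left).symm.trans (Equiv.ofInjective q h.injective_right)
  let f : V ≃ W := (Equiv.Set.sumCompl (Set.range p)).symm.trans
    ((matched.sumCongr e).trans (Equiv.Set.sumCompl (Set.range q)))
  have f_matched (i : ι) : f (p i) = q i := by
    simp [f, matched, Equiv.Set.sumCompl_symm_apply_of_mem]
  have f_rest (z : ↥(Set.range p)ᶜ) : f z = e z := by
    simp [f, Equiv.Set.sumCompl_symm_apply_compl]
  have not_adj_mixed (i : ι) (z : ↥(Set.range p)ᶜ) (hG : G.Adj (p i) z) :
      ¬ H.Adj (f (p i)) (f z) := by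
    rw [f_matched, f_rest]
    intro hH
    exact (h.closed i).elim (fun hp => z.2 (hp z hG)) fun hq => (e z).2 (hq (e z) hH)
  refine ⟨f, fun x y hG => ?_⟩
  by_cases hx : x ∈ Set.range p <;> by_cases hy : y ∈ Set.range p
  · obtain ⟨⟨i, rfl⟩, ⟨j, rfl⟩⟩ := And.intro hx hy
    simpa only [f_matched] using h.not_adj i j hG
  · obtain ⟨i, rfl⟩ := hx
    exact not_adj_mixed i ⟨y, hy⟩ hG
  · obtain ⟨j, rfl⟩ := hy
    exact fun hH => not_adj_mixed j ⟨x, hx⟩ hG.symm hH.symm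
  · rw [f_rest ⟨x, hx⟩, f_rest ⟨y, hy⟩]
    exact he (x := ⟨x, hx⟩) (y := ⟨y, hy⟩) hG

end Packing

section EdgeFamily

variable {V W : Type*} [DecidableEq V] [DecidableEq W]

theorem sym2_toFinset_injective : Function.Injective (Sym2.toFinset : Sym2 V → Finset V) :=
  fun p q h => Sym2.ext fun x => by rw [← Sym2.mem_toFinset, h, Sym2.mem_toFinset]

variable [Finite V] [Finite W]

theorem card_edgeFamily (G : SimpleGraph V) : #(edgeFamily G) = G.edgeSet.ncard := by
  rw [edgeFamily, card_image_of_injective _ sym2_toFinset_injective,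
    Set.ncard_eq_toFinset_card G.edgeSet]

theorem pair_mem_edgeFamily {G : SimpleGraph V} {x y : V} :
    {x, y} ∈ edgeFamily G ↔ G.Adj x y := by
  rw [← Sym2.toFinset_mk_eq, edgeFamily, sym2_toFinset_injective.mem_finset_image,
    Set.Finite.mem_toFinset, SimpleGraph.mem_edgeSet]

theorem uniform_edgeFamily (G : SimpleGraph V) : Uniform 2 (edgeFamily G) := by
  intro e he
  obtain ⟨p, hp, rfl⟩ := mem_image.1 he
  exact p.card_toFinset_of_not_isDiag (G.not_isDiag_of_mem_edgeSet (by simpa using hp))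

theorem exists_edgeFamily_eq {E : Finset (Finset V)} (hE : Uniform 2 E) :
    ∃ G : SimpleGraph V, edgeFamily G = E := by
  refine ⟨.fromEdgeSet {p | p.toFinset ∈ E}, Finset.ext fun e => ⟨fun he => ?_, fun he => ?_⟩⟩
  · obtain ⟨x, y, -, rfl⟩ := card_eq_two.1 (uniform_edgeFamily _ e he)
    rw [← Sym2.toFinset_mk_eq]
    exact ((SimpleGraph.fromEdgeSet_adj _).1 (pair_mem_edgeFamily.1 he)).1
  · obtain ⟨x, y, hxy, rfl⟩ := card_eq_two.1 (hE e he)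
    rw [← Sym2.toFinset_mk_eq] at he
    exact pair_mem_edgeFamily.2 ((SimpleGraph.fromEdgeSet_adj _).2 ⟨he, hxy⟩)

theorem packs_edgeFamily_iff {G : SimpleGraph V} {H : SimpleGraph W} :
    Packs (edgeFamily G) (edgeFamily H) ↔ GraphPacks G H := by
  refine exists_congr fun f => ⟨fun hf x y hG hH => ?_, fun hf e he hfe => ?_⟩
  · exact hf {x, y} (pair_mem_edgeFamily.2 hG)
      (by simpa [image_insert] using pair_mem_edgeFamily.2 hH)
  · obtain ⟨x, y, -, rfl⟩ := card_eq_two.1 (uniform_edgeFamily G e he)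
    rw [image_insert, image_singleton] at hfe
    exact hf (pair_mem_edgeFamily.1 he) (pair_mem_edgeFamily.1 hfe)

end EdgeFamily

section Counting

variable {V W : Type*} {G : SimpleGraph V} {H : SimpleGraph W}

theorem GraphPacks.of_iso {U : Type*} {K : SimpleGraph U} (e : H ≃g K) (h : GraphPacks G H) :
    GraphPacks G K := by
  obtain ⟨f, hf⟩ := h
  exact ⟨f.trans e.toEquiv, fun x y hG hK => hf hG (e.map_adj_iff.1 hK)⟩

theorem graphPacks_of_ncard_mul_ncard_lt_choose [Finite V] (e : V ≃ W)
    (hedges : G.edgeSet.ncard * H.edgeSet.ncard < (Nat.card V).choose 2) :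
    GraphPacks G H := by
  classical
  have := Fintype.ofFinite V
  let φ : H.comap e ≃g H := SimpleGraph.Iso.comap e H
  refine .of_iso φ (packs_edgeFamily_iff.1 (packs_of_card_mul_card_lt_choose
    (uniform_edgeFamily G) (uniform_edgeFamily _) ?_))
  rwa [card_edgeFamily, card_edgeFamily, ← Nat.card_eq_fintype_card,
    ← Nat.card_coe_set_eq (H.comap _).edgeSet, Nat.card_congr φ.mapEdgeSet, Nat.card_coe_set_eq]

theorem mul_lt_choose_two {n a b : ℕ} (ha : 0 < a) (han : 2 * a ≤ n)
    (hab : 2 * (a + b) + 3 ≤ 3 * n) : a * b < n.choose 2 := by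
  obtain ⟨m, rfl⟩ : ∃ m, n = m + 1 := ⟨n - 1, by omega⟩
  have hchoose : 2 * (m + 1).choose 2 = (m + 1) * m := by
    rw [Nat.choose_two_right, Nat.two_mul_div_two_of_even (Nat.even_mul_pred_self _),
      Nat.add_sub_cancel]
  suffices 2 * (a * b) < (m + 1) * m by omega
  have hprod : 0 ≤ ((m : ℤ) - a) * (m + 1 - 2 * a) := mul_nonneg (by omega) (by omega)
  zify at *
  nlinarith

theorem graphPacks_of_two_mul_ncard_le [Finite V] (e : V ≃ W)
    (hG : 2 * G.edgeSet.ncard ≤ Nat.card V)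
    (hedges : 2 * (G.edgeSet.ncard + H.edgeSet.ncard) + 3 ≤ 3 * Nat.card V) :
    GraphPacks G H := by
  obtain rfl | hne := eq_or_ne G ⊥
  · exact graphPacks_bot e
  have hpos : 0 < G.edgeSet.ncard := by
    rwa [Set.ncard_pos, SimpleGraph.edgeSet_nonempty]
  exact graphPacks_of_ncard_mul_ncard_lt_choose e (mul_lt_choose_two hpos hG hedges)

end Counting

section Degrees

variable {V : Type*} {G : SimpleGraph V}

theorem two_mul_ncard_edgeSet [Fintype V] [DecidableRel G.Adj] :
    2 * G.edgeSet.ncard = ∑ v, G.degree v := by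
  rw [G.sum_degrees_eq_twice_card_edges, Set.ncard_eq_toFinset_card', SimpleGraph.edgeFinset]

theorem exists_two_neighbors_of_card_lt [Finite V] (h : Nat.card V < 2 * G.edgeSet.ncard) :
    ∃ v a b, a ≠ b ∧ G.Adj v a ∧ G.Adj v b := by
  classical
  have := Fintype.ofFinite V
  have hsum : ∑ _v : V, 1 < ∑ v, G.degree v := by
    simpa [← two_mul_ncard_edgeSet] using h
  obtain ⟨v, -, hv⟩ := exists_lt_of_sum_lt hsum
  obtain ⟨a, ha, b, hb, hab⟩ := one_lt_card.1 hv
  exact ⟨v, a, b, hab, by simpa using ha, by simpa using hb⟩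

/-- If every leaf had neighbour `y`, then all other vertices would have degree at least two, once
the edge from a leaf to `y` is counted twice, and there would be at least `n - 1` edges. -/
theorem exists_isLeafAt_ne [Finite V] (hpos : ∀ v, ∃ w, G.Adj v w)
    (hedges : G.edgeSet.ncard + 2 ≤ Nat.card V) (y : V) : ∃ x z, IsLeafAt G x z ∧ z ≠ y := by
  classical
  have := Fintype.ofFinite V
  by_contra! hleaf
  have two_le {v : V} (hv : v ≠ y) : 2 ≤ G.degree v + if G.Adj y v then 1 else 0 := by
    have hdeg : 0 < G.degree v := (G.degree_pos_iff_exists_adj v).2 (hpos v)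
    by_contra! hlt
    obtain ⟨z, hz, huniq⟩ := SimpleGraph.degree_eq_one_iff_existsUnique_adj.1
      (show G.degree v = 1 by omega)
    obtain rfl := hleaf v z fun w => ⟨huniq w, fun h => h ▸ hz⟩
    rw [if_pos hz.symm] at hlt
    omega
  have degree_eq : ∑ v ∈ univ.erase y, (if G.Adj y v then 1 else 0) = G.degree y := by
    rw [sum_erase univ (by simp), sum_boole, Nat.cast_id, ← G.neighborFinset_eq_filter,
      G.card_neighborFinset_eq_degree]
  have hsum : 2 * (Nat.card V - 1) ≤ 2 * G.edgeSet.ncard :=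
    calc 2 * (Nat.card V - 1) = ∑ v ∈ univ.erase y, 2 := by simp [mul_comm]
      _ ≤ ∑ v ∈ univ.erase y, (G.degree v + if G.Adj y v then 1 else 0) :=
        sum_le_sum fun v hv => two_le (ne_of_mem_erase hv)
      _ = (∑ v ∈ univ.erase y, G.degree v) + G.degree y := by
        rw [sum_add_distrib, degree_eq]
      _ = 2 * G.edgeSet.ncard := by rw [sum_erase_add _ _ (mem_univ y), two_mul_ncard_edgeSet]
  omega

theorem IsLeafAt.adj {x y : V} (h : IsLeafAt G x y) : G.Adj x y :=
  (h y).2 rfl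

theorem IsLeafAt.ne_of_isLeafAt {x y x' y' : V} (hx : IsLeafAt G x y) (hx' : IsLeafAt G x' y')
    (hy : y ≠ y') (hyx : ¬ IsLeafAt G y x) : x ≠ x' ∧ x ≠ y' ∧ x' ≠ y := by
  refine ⟨?_, ?_, ?_⟩
  · rintro rfl
    exact hy ((hx' y).1 hx.adj)
  · rintro rfl
    obtain rfl := (hx x').1 hx'.adj.symm
    exact hyx hx'
  · rintro rfl
    obtain rfl := (hx' x).1 hx.adj.symm
    exact hyx hx'

theorem exists_three_edges_of_leaves {x y x' y' : V} (hx : IsLeafAt G x y)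
    (hx' : IsLeafAt G x' y') (hy : y ≠ y') (hyx : ¬ IsLeafAt G y x) :
    ∃ F : Finset (Sym2 V), (∀ e ∈ F, e ∈ G.edgeSet ∧ (x ∈ e ∨ x' ∈ e ∨ y ∈ e)) ∧ #F = 3 := by
  classical
  obtain ⟨hxx', hxy', hx'y⟩ := hx.ne_of_isLeafAt hx' hy hyx
  obtain ⟨z, hyz, hzx⟩ : ∃ z, G.Adj y z ∧ z ≠ x := by
    by_contra! hz
    exact hyx fun z => ⟨hz z, fun h => h ▸ hx.adj.symm⟩
  refine ⟨{s(x, y), s(x', y'), s(y, z)}, by simp [hx.adj, hx'.adj, hyz], ?_⟩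
  rw [card_eq_three]
  exact ⟨_, _, _, by simp [hxx', hxy'], by simp [hzx.symm, hx.adj.ne],
    by simp [hx'y, hy.symm], rfl⟩

theorem ncard_edgeSet_induce_compl_add_card_le [Finite V] (s : Set V) (F : Finset (Sym2 V))
    (hF : ∀ e ∈ F, e ∈ G.edgeSet ∧ ∃ v ∈ s, v ∈ e) :
    (G.induce sᶜ).edgeSet.ncard + #F ≤ G.edgeSet.ncard := by
  let incl : Sym2 ↥sᶜ → Sym2 V := Sym2.map (↑)
  have hdisj : Disjoint (incl '' (G.induce sᶜ).edgeSet) F := by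
    rw [Set.disjoint_left]
    rintro _ ⟨e, -, rfl⟩ he
    obtain ⟨v, hv, hve⟩ := (hF _ he).2
    obtain ⟨w, -, rfl⟩ := Sym2.mem_map.1 hve
    exact w.2 hv
  have hsub : incl '' (G.induce sᶜ).edgeSet ∪ F ⊆ G.edgeSet := by
    rintro e (⟨e, he, rfl⟩ | he)
    · induction e with | _ x y => exact he
    · exact (hF e he).1
  calc (G.induce sᶜ).edgeSet.ncard + #F
    _ = (incl '' (G.induce sᶜ).edgeSet ∪ F).ncard := by
      rw [Set.ncard_union_eq hdisj, Set.ncard_coe_finset,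
        Set.ncard_image_of_injective _ (Sym2.map.injective Subtype.val_injective)]
    _ ≤ G.edgeSet.ncard := Set.ncard_le_ncard hsub

end Degrees

theorem injective_vec_four {α : Type*} {a b c d : α} (hab : a ≠ b) (hac : a ≠ c) (had : a ≠ d)
    (hbc : b ≠ c) (hbd : b ≠ d) (hcd : c ≠ d) : Function.Injective ![a, b, c, d] := by
  rw [← List.nodup_ofFn]
  simp [*]

section Reducible

variable {V W : Type*} [Finite V] [Finite W] {G : SimpleGraph V} {H : SimpleGraph W}

theorem IsPartialPacking.isReducible {k : ℕ} {p : Fin k → V} {q : Fin k → W}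
    (h : IsPartialPacking G H p q) (hk : 0 < k) (F : Finset (Sym2 V)) (F' : Finset (Sym2 W))
    (hF : ∀ e ∈ F, e ∈ G.edgeSet ∧ ∃ i, p i ∈ e) (hF' : ∀ e ∈ F', e ∈ H.edgeSet ∧ ∃ i, q i ∈ e)
    (hcard : 3 * k ≤ 2 * (#F + #F')) : IsReducible G H := by
  refine ⟨k, hk, p, q, h, ?_⟩
  have := ncard_edgeSet_induce_compl_add_card_le (G := G) (Set.range p) F (by simpa using hF)
  have := ncard_edgeSet_induce_compl_add_card_le (G := H) (Set.range q) F' (by simpa using hF')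
  omega

theorem isReducible_of_isolated {u : V} (hu : ∀ z, ¬ G.Adj u z)
    (hH : Nat.card W < 2 * H.edgeSet.ncard) : IsReducible G H := by
  classical
  obtain ⟨v, a, b, hab, hva, hvb⟩ := exists_two_neighbors_of_card_lt hH
  have hpq : IsPartialPacking G H ![u] ![v] :=
    { injective_left := Function.injective_of_subsingleton _
      injective_right := Function.injective_of_subsingleton _
      not_adj := by simp
      closed := by simp [hu] }
  refine hpq.isReducible one_pos ∅ {s(v, a), s(v, b)} (by simp) (by simp [hva, hvb]) ?_
  rw [card_empty, card_pair (Sym2.congr_right.not.2 hab)]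
  norm_num

theorem isReducible_of_isLeafAt_of_isLeafAt {x y : V} (hxy : IsLeafAt G x y)
    (hyx : IsLeafAt G y x) (hpos : ∀ v, ∃ w, H.Adj v w)
    (hedges : H.edgeSet.ncard + 2 ≤ Nat.card W) (hcard : 2 < Nat.card W) : IsReducible G H := by
  classical
  have : Nonempty W := (Nat.card_pos_iff.1 (by omega)).1
  obtain ⟨a, b, hab, -⟩ := exists_isLeafAt_ne hpos hedges (Classical.arbitrary W)
  obtain ⟨c, hca, hcb⟩ : ∃ c, c ≠ a ∧ c ≠ b := by
    have := Fintype.ofFinite W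
    obtain ⟨c, -, hc⟩ := exists_mem_notMem_of_card_lt_card (s := {a, b}) (t := univ)
      (card_le_two.trans_lt (by rwa [card_univ, ← Nat.card_eq_fintype_card]))
    exact ⟨c, by simpa using hc⟩
  obtain ⟨d, hcd⟩ := hpos c
  have hab' : H.Adj a b := (hab b).2 rfl
  have hxy' : G.Adj x y := (hxy y).2 rfl
  have hpq : IsPartialPacking G H ![x, y] ![c, a] :=
    { injective_left := by simp [Function.Injective, Fin.forall_fin_two, hxy'.ne, hxy'.ne']
      injective_right := by simp [Function.Injective, Fin.forall_fin_two, hca, hca.symm]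
      not_adj := by simp [Fin.forall_fin_two, H.adj_comm c a, hab c, hcb]
      closed := by simp [Fin.forall_fin_two, hxy _, hyx _] }
  refine hpq.isReducible two_pos {s(x, y)} {s(a, b), s(c, d)} (by simp [hxy'])
    (by simp [hab', hcd]) ?_
  rw [card_singleton, card_pair (by simp [hca.symm, hcb.symm])]

theorem isReducible_of_leaves {x y x' y' : V} {a b a' b' : W}
    (hx : IsLeafAt G x y) (hx' : IsLeafAt G x' y') (hy : y ≠ y') (hyx : ¬ IsLeafAt G y x)
    (ha : IsLeafAt H a b) (ha' : IsLeafAt H a' b') (hb : b ≠ b') (hba : ¬ IsLeafAt H b a) :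
    IsReducible G H := by
  obtain ⟨hxx', hxy', hx'y⟩ := hx.ne_of_isLeafAt hx' hy hyx
  obtain ⟨haa', hab', ha'b⟩ := ha.ne_of_isLeafAt ha' hb hba
  obtain ⟨F, hF, hFcard⟩ := exists_three_edges_of_leaves hx hx' hy hyx
  obtain ⟨F', hF', hF'card⟩ := exists_three_edges_of_leaves ha ha' hb hba
  have hpq : IsPartialPacking G H ![x, x', y, y'] ![b, b', a', a] :=
    { injective_left := injective_vec_four hxx' hx.adj.ne hxy' hx'y hx'.adj.ne hy
      injective_right :=
        injective_vec_four hb ha'b.symm ha.adj.ne' ha'.adj.ne' hab'.symm haa'.symm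
      not_adj := by
        simp [Fin.forall_fin_succ, hx _, hx' _, ha _, ha' _, G.adj_comm y x, G.adj_comm y x',
          G.adj_comm y' x, G.adj_comm y' x', H.adj_comm b a', H.adj_comm b' a, hy, hy.symm, hb,
          hb.symm, hx'y, hxy', hab', ha'b]
      closed := by simp [Fin.forall_fin_succ, hx _, hx' _, ha _, ha' _] }
  refine hpq.isReducible (by norm_num) F F' (fun e he => ?_) (fun e he => ?_) (by omega)
  · obtain ⟨hG, h | h | h⟩ := hF e he
    exacts [⟨hG, 0, h⟩, ⟨hG, 1, h⟩, ⟨hG, 2, h⟩]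
  · obtain ⟨hH, h | h | h⟩ := hF' e he
    exacts [⟨hH, 3, h⟩, ⟨hH, 2, h⟩, ⟨hH, 0, h⟩]

end Reducible

section PackingTheorem

theorem isReducible_of_card_lt {V W : Type*} [Finite V] [Finite W] {G : SimpleGraph V}
    {H : SimpleGraph W} (hVW : Nat.card V = Nat.card W)
    (hG : Nat.card V < 2 * G.edgeSet.ncard) (hH : Nat.card W < 2 * H.edgeSet.ncard)
    (hedges : 2 * (G.edgeSet.ncard + H.edgeSet.ncard) + 3 ≤ 3 * Nat.card V) :
    IsReducible G H := by
  by_cases hposG : ∀ v, ∃ w, G.Adj v w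
  swap
  · push Not at hposG
    obtain ⟨u, hu⟩ := hposG
    exact isReducible_of_isolated hu hH
  by_cases hposH : ∀ v, ∃ w, H.Adj v w
  swap
  · push Not at hposH
    obtain ⟨u, hu⟩ := hposH
    exact (isReducible_of_isolated hu hG).symm
  obtain ⟨v₀, -⟩ := exists_two_neighbors_of_card_lt hG
  obtain ⟨w₀, -⟩ := exists_two_neighbors_of_card_lt hH
  obtain ⟨x, y, hxy, -⟩ := exists_isLeafAt_ne hposG (by omega) v₀
  obtain ⟨a, b, hab, -⟩ := exists_isLeafAt_ne hposH (by omega) w₀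
  by_cases hyx : IsLeafAt G y x
  · exact isReducible_of_isLeafAt_of_isLeafAt hxy hyx hposH (by omega) (by omega)
  by_cases hba : IsLeafAt H b a
  · exact (isReducible_of_isLeafAt_of_isLeafAt hab hba hposG (by omega) (by omega)).symm
  obtain ⟨x', y', hxy', hy⟩ := exists_isLeafAt_ne hposG (by omega) y
  obtain ⟨a', b', hab', hb⟩ := exists_isLeafAt_ne hposH (by omega) b
  exact isReducible_of_leaves hxy hxy' hy.symm hyx hab hab' hb.symm hba

theorem card_compl_range_add {V : Type*} [Finite V] {k : ℕ} {p : Fin k → V}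
    (hp : Function.Injective p) : Nat.card ↥(Set.range p)ᶜ + k = Nat.card V := by
  have := Set.ncard_add_ncard_compl (Set.range p)
  rw [Set.ncard_range_of_injective hp, Nat.card_fin] at this
  rw [Nat.card_coe_set_eq]
  omega

theorem graphPacks_of_two_mul_ncard_add_three_le {V W : Type*} [Finite V] [Finite W]
    {G : SimpleGraph V} {H : SimpleGraph W} (hVW : Nat.card V = Nat.card W)
    (hedges : 2 * (G.edgeSet.ncard + H.edgeSet.ncard) + 3 ≤ 3 * Nat.card V) :
    GraphPacks G H := by
  induction hn : Nat.card V using Nat.strong_induction_on generalizing V W with | _ n ih =>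
  subst hn
  obtain ⟨e⟩ := Finite.card_eq.1 hVW
  by_cases hG : 2 * G.edgeSet.ncard ≤ Nat.card V
  · exact graphPacks_of_two_mul_ncard_le e hG hedges
  by_cases hH : 2 * H.edgeSet.ncard ≤ Nat.card W
  · exact (graphPacks_of_two_mul_ncard_le e.symm hH (by omega)).symm
  obtain ⟨k, hk, p, q, hpq, hdeleted⟩ :=
    isReducible_of_card_lt hVW (by omega) (by omega) hedges
  have hp := card_compl_range_add hpq.injective_left
  have hq := card_compl_range_add hpq.injective_right
  exact hpq.graphPacks (ih _ (by omega) (by omega) (by omega) rfl)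

theorem packs_of_two_mul_card_add_three_le {V : Type*} [Fintype V] [DecidableEq V]
    {E₁ E₂ : Finset (Finset V)} (h₁ : Uniform 2 E₁) (h₂ : Uniform 2 E₂)
    (hedges : 2 * (#E₁ + #E₂) + 3 ≤ 3 * Fintype.card V) : Packs E₁ E₂ := by
  obtain ⟨G, rfl⟩ := exists_edgeFamily_eq h₁
  obtain ⟨H, rfl⟩ := exists_edgeFamily_eq h₂
  rw [card_edgeFamily, card_edgeFamily, ← Nat.card_eq_fintype_card] at hedges
  exact packs_edgeFamily_iff.2 (graphPacks_of_two_mul_ncard_add_three_le rfl hedges)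

end PackingTheorem

section LowerBound

variable {V : Type*} [Fintype V] [DecidableEq V]

/-- The full star: all `(k + 1)`-element sets containing `z`. It packs with no `(k + 1)`-uniform
family that covers all vertices. -/
def fullStar (k : ℕ) (z : V) : Finset (Finset V) :=
  ((univ.erase z).powersetCard k).image (insert z)

theorem mem_fullStar {k : ℕ} {z : V} {e : Finset V} : e ∈ fullStar k z ↔ z ∈ e ∧ #e = k + 1 := by
  simp only [fullStar, mem_image, mem_powersetCard]
  constructor
  · rintro ⟨s, ⟨hs, rfl⟩, rfl⟩
    exact ⟨mem_insert_self z s, card_insert_of_notMem fun hz => by simpa using hs hz⟩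
  · rintro ⟨hz, he⟩
    exact ⟨e.erase z, ⟨erase_subset_erase z (subset_univ e), by simp [card_erase_of_mem hz, he]⟩,
      insert_erase hz⟩

theorem card_fullStar_le (k : ℕ) (z : V) : #(fullStar k z) ≤ (Fintype.card V - 1).choose k := by
  simpa [fullStar] using card_image_le (s := (univ.erase z).powersetCard k) (f := insert z)

theorem not_packs_fullStar {W : Type*} [DecidableEq W] {k : ℕ} (z : V) {E : Finset (Finset W)}
    (hE : Uniform (k + 1) E) (hcover : ∀ w, ∃ e ∈ E, w ∈ e) : ¬ Packs (fullStar k z) E := by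
  rintro ⟨f, hf⟩
  obtain ⟨e, he, hze⟩ := hcover (f z)
  refine hf (e.image f.symm) (mem_fullStar.2 ⟨?_, ?_⟩) (by simpa [image_image] using he)
  · simpa using mem_image_of_mem f.symm hze
  · rw [card_image_of_injective _ f.symm.injective, hE e he]

end LowerBound

theorem exists_uniform_cover {n k : ℕ} (hk : 0 < k) (hkn : k ≤ n) :
    ∃ E : Finset (Finset (Fin n)),
      Uniform k E ∧ (∀ v, ∃ e ∈ E, v ∈ e) ∧ #E ≤ (n + k - 1) / k := by
  let start (i : ℕ) : ℕ := min (i * k) (n - k)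
  let block (i : ℕ) : Finset (Fin n) :=
    (Ico (start i) (start i + k)).attachFin fun j hj => by grind
  refine ⟨(range ((n + k - 1) / k)).image block, ?_, fun v => ?_, ?_⟩
  · simp [Uniform, block]
  · refine ⟨block (v / k), mem_image_of_mem block ?_, ?_⟩
    · rw [mem_range, Nat.div_lt_iff_lt_mul hk]
      have := Nat.lt_div_mul_add (a := n + k - 1) hk
      grind
    · have h₁ := Nat.div_mul_le_self v k
      have h₂ := Nat.lt_div_mul_add (a := (v : ℕ)) hk
      simp only [block, start, mem_attachFin, mem_Ico]
      omega
  · simpa using card_image_le (s := range ((n + k - 1) / k)) (f := block)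

theorem exists_not_packs_card_le {n k : ℕ} (hkn : k + 1 ≤ n) :
    ∃ E₁ E₂ : Finset (Finset (Fin n)), Uniform (k + 1) E₁ ∧ Uniform (k + 1) E₂ ∧
      ¬ Packs E₁ E₂ ∧ #E₁ + #E₂ ≤ (n - 1).choose k + (n + k) / (k + 1) := by
  obtain ⟨E, hE, hcover, (hcard : #E ≤ (n + k) / (k + 1))⟩ :=
    exists_uniform_cover k.succ_pos hkn
  let z : Fin n := ⟨0, by omega⟩
  have hstar : #(fullStar k z) ≤ (n - 1).choose k := by simpa using card_fullStar_le k z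
  exact ⟨fullStar k z, E, fun e he => (mem_fullStar.1 he).2, hE, not_packs_fullStar z hE hcover,
    by omega⟩

theorem ceil_three_mul_div_two (n : ℕ) : ⌈(3 * (n : ℚ)) / 2⌉ = (((3 * n + 1) / 2 : ℕ) : ℤ) := by
  have := Rat.ceil_natCast_div_natCast (3 * n) 2
  push_cast at this ⊢
  omega

/-- for `n ≥ 2`, `m(n,2) = ⌈3n/2⌉ − 1`: any two graphs on `n` vertices
with `|E(G₁)| + |E(G₂)| ≤ ⌈3n/2⌉ − 2` pack, and there exist two non-packing graphs on
`n` vertices with `|E(G₁)| + |E(G₂)| = ⌈3n/2⌉ − 1`. -/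
theorem stmt_12 (n : ℕ) (hn : 2 ≤ n) :
    (∀ E₁ E₂ : Finset (Finset (Fin n)), Uniform 2 E₁ → Uniform 2 E₂ →
      (E₁.card + E₂.card : ℤ) ≤ ⌈(3 * (n : ℚ)) / 2⌉ - 2 → Packs E₁ E₂) ∧
    (∃ E₁ E₂ : Finset (Finset (Fin n)), Uniform 2 E₁ ∧ Uniform 2 E₂ ∧ ¬ Packs E₁ E₂ ∧
      (E₁.card + E₂.card : ℤ) = ⌈(3 * (n : ℚ)) / 2⌉ - 1) ∧
    (mMin n 2 : ℤ) = ⌈(3 * (n : ℚ)) / 2⌉ - 1 := by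
  have hceil := ceil_three_mul_div_two n
  have packs {E₁ E₂ : Finset (Finset (Fin n))} (h₁ : Uniform 2 E₁) (h₂ : Uniform 2 E₂)
      (h : (#E₁ + #E₂ : ℤ) ≤ ⌈(3 * (n : ℚ)) / 2⌉ - 2) : Packs E₁ E₂ :=
    packs_of_two_mul_card_add_three_le h₁ h₂ (by rw [Fintype.card_fin]; omega)
  obtain ⟨E₁, E₂, h₁, h₂, hnot, hle⟩ := exists_not_packs_card_le (k := 1) hn
  have hcard : (#E₁ + #E₂ : ℤ) = ⌈(3 * (n : ℚ)) / 2⌉ - 1 := by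
    have := mt (packs h₁ h₂) hnot
    rw [Nat.choose_one_right] at hle
    omega
  have hleast : IsLeast {m | ∃ E₁ E₂ : Finset (Finset (Fin n)), Uniform 2 E₁ ∧ Uniform 2 E₂ ∧
      ¬ Packs E₁ E₂ ∧ #E₁ + #E₂ = m} (#E₁ + #E₂) := by
    refine ⟨⟨E₁, E₂, h₁, h₂, hnot, rfl⟩, ?_⟩
    rintro _ ⟨F₁, F₂, k₁, k₂, hF, rfl⟩
    have := mt (packs k₁ k₂) hF
    omega
  refine ⟨fun _ _ => packs, ⟨E₁, E₂, h₁, h₂, hnot, hcard⟩, ?_⟩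
  rw [mMin, hleast.csInf_eq]
  exact_mod_cast hcard
end
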